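/- Let < be a strict total order on A. For each mem-basic form P over A, writing σ for the enumeration of α̃(P) in increasing order (so |σ| = |α̃(P)|), there exist mem-basic forms P_0, …, P_{2^{|σ|}−1} such that CP_cl ⊢ P = F_σ(P_0, …, P_{2^{|σ|}−1}). -/

import Mathlib

/-!
The only step that uses an axiom is `exists_extract`: an atom `a ∈ sha P` can be pulled to the
root of `P` by (CL2). If `P = Q ◁ b ▷ R` with `b ≠ a`, then `a` is shared by `Q` and `R`, so
inductively `Q = Q₁ ◁ a ▷ Q₂` and `R = R₁ ◁ a ▷ R₂`, and (CL2) exchanges `b` and `a`. Neither branch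
acquires new atoms, and both keep every other shared atom of `P`. Hence the extraction can be
iterated along any repetition-free list of shared atoms (`exists_Fseq`), in particular along the
increasing enumeration of `sha P`.
-/

/-- Conditional expressions over a set `A` of atoms: constants T, F, atoms, and the
ternary conditional `cond P Q R` read `P ◁ Q ▷ R` ("if Q then P else R"). -/
inductive Expr (A : Type) : Type
  | T : Expr A
  | F : Expr A
  | atom : A → Expr A
  | cond : Expr A → Expr A → Expr A → Expr A

namespace Expr

/-- Derivability from the axiom system CP_cl = CP + (CPmem) + (CL2). -/
inductive DerCl {A : Type} : Expr A → Expr A → Prop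
  | refl (P : Expr A) : DerCl P P
  | symm {P Q : Expr A} : DerCl P Q → DerCl Q P
  | trans {P Q R : Expr A} : DerCl P Q → DerCl Q R → DerCl P R
  | congr {P P' Q Q' R R' : Expr A} :
      DerCl P P' → DerCl Q Q' → DerCl R R' →
      DerCl (cond P Q R) (cond P' Q' R')
  | cp1 (x y : Expr A) : DerCl (cond x T y) x
  | cp2 (x y : Expr A) : DerCl (cond x F y) y
  | cp3 (x : Expr A) : DerCl (cond T x F) x
  | cp4 (x y z u v : Expr A) :
      DerCl (cond x (cond y z u) v) (cond (cond x y v) z (cond x u v))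
  | cpmem (x y z u v w : Expr A) :
      DerCl (cond x y (cond z u (cond v y w))) (cond x y (cond z u w))
  | cl2 (x y z u v w : Expr A) :
      DerCl (cond (cond x y z) u (cond v y w)) (cond (cond x u v) y (cond z u w))

/-- The set of atoms occurring in a conditional expression. -/
def atoms {A : Type} [DecidableEq A] : Expr A → Finset A
  | T => ∅
  | F => ∅
  | atom a => {a}
  | cond P Q R => atoms P ∪ atoms Q ∪ atoms R

/-- Mem-basic forms. -/
inductive IsMBF {A : Type} [DecidableEq A] : Expr A → Prop
  | T : IsMBF T
  | F : IsMBF F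
  | cond {P Q : Expr A} (a : A) : IsMBF P → IsMBF Q →
      a ∉ atoms P → a ∉ atoms Q → IsMBF (cond P (atom a) Q)

/-- The shared alphabet α̃ of a basic form. -/
def sha {A : Type} [DecidableEq A] : Expr A → Finset A
  | cond P (atom a) Q => insert a (sha P ∩ sha Q)
  | _ => ∅

/-- `Fseq σ P` is the basic form F_σ(P_0, …, P_{2^{|σ|}−1}):
F_ε(P_0) = P_0 and F_{aρ}(P_0,…) = F_ρ(P_0,…,P_{2^{|ρ|}−1}) ◁ a ▷ F_ρ(P_{2^{|ρ|}},…). -/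
def Fseq {A : Type} : (σ : List A) → (Fin (2 ^ σ.length) → Expr A) → Expr A
  | [], P => P ⟨0, by positivity⟩
  | a :: ρ, P =>
      cond (Fseq ρ (fun i => P ⟨i.1, by have := i.2; simp [Nat.pow_succ]; omega⟩))
        (atom a)
        (Fseq ρ (fun i => P ⟨2 ^ ρ.length + i.1, by have := i.2; simp [Nat.pow_succ]; omega⟩))

end Expr

namespace Expr

/-- A shared atom of a mem-basic form can be moved to the root. The bound on `atoms` keeps the
branches mem-basic when they are placed under further atoms; the bound on `sha` allows the
extraction of further shared atoms from the branches. -/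
lemma exists_extract {A : Type} [DecidableEq A] (a : A) {P : Expr A} (hP : IsMBF P)
    (ha : a ∈ sha P) :
    ∃ P₁ P₂ : Expr A, IsMBF P₁ ∧ IsMBF P₂ ∧ atoms P₁ ⊆ atoms P ∧ atoms P₂ ⊆ atoms P ∧
      (∀ b ∈ sha P, b ≠ a → b ∈ sha P₁ ∧ b ∈ sha P₂) ∧ DerCl P (cond P₁ (atom a) P₂) := by
  induction hP with
  | T => simp [sha] at ha
  | F => simp [sha] at ha
  | @cond Q R c hQ hR hcQ hcR ihQ ihR =>
    by_cases hac : a = c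
    · subst hac
      refine ⟨Q, R, hQ, hR, ?_, ?_, ?_, .refl _⟩
      · intro x hx; simp [atoms, hx]
      · intro x hx; simp [atoms, hx]
      · intro b hb hba
        simpa [sha, hba] using hb
    · have ha' : a ∈ sha Q ∧ a ∈ sha R := by simpa [sha, hac] using ha
      obtain ⟨Q₁, Q₂, hQ₁, hQ₂, aQ₁, aQ₂, sQ, dQ⟩ := ihQ ha'.1
      obtain ⟨R₁, R₂, hR₁, hR₂, aR₁, aR₂, sR, dR⟩ := ihR ha'.2
      refine ⟨Expr.cond Q₁ (atom c) R₁, Expr.cond Q₂ (atom c) R₂,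
        .cond c hQ₁ hR₁ (fun h => hcQ (aQ₁ h)) (fun h => hcR (aR₁ h)),
        .cond c hQ₂ hR₂ (fun h => hcQ (aQ₂ h)) (fun h => hcR (aR₂ h)), ?_, ?_, ?_,
        .trans (.congr dQ (.refl _) dR) (.cl2 _ _ _ _ _ _)⟩
      · simp only [atoms]
        exact Finset.union_subset_union (Finset.union_subset_union aQ₁ subset_rfl) aR₁
      · simp only [atoms]
        exact Finset.union_subset_union (Finset.union_subset_union aQ₂ subset_rfl) aR₂
      · intro b hb hba
        simp only [sha, Finset.mem_insert, Finset.mem_inter] at hb ⊢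
        rcases hb with hb | ⟨hbQ, hbR⟩
        · exact ⟨.inl hb, .inl hb⟩
        · exact ⟨.inr ⟨(sQ b hbQ hba).1, (sR b hbR hba).1⟩,
            .inr ⟨(sQ b hbQ hba).2, (sR b hbR hba).2⟩⟩

lemma exists_Fseq {A : Type} [DecidableEq A] (σ : List A) (hσ : σ.Nodup) {P : Expr A}
    (hP : IsMBF P) (hs : ∀ a ∈ σ, a ∈ sha P) :
    ∃ Ps : Fin (2 ^ σ.length) → Expr A, (∀ i, IsMBF (Ps i)) ∧ DerCl P (Fseq σ Ps) := by
  induction σ generalizing P with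
  | nil => exact ⟨fun _ => P, fun _ => hP, .refl _⟩
  | cons a ρ ih =>
    obtain ⟨haρ, hρ⟩ := List.nodup_cons.1 hσ
    obtain ⟨P₁, P₂, h₁, h₂, -, -, hsha, hd⟩ := exists_extract a hP (hs a (by simp))
    have hmem : ∀ b ∈ ρ, b ∈ sha P₁ ∧ b ∈ sha P₂ := fun b hb =>
      hsha b (hs b (by simp [hb])) (fun h => haρ (h ▸ hb))
    obtain ⟨Ps₁, m₁, d₁⟩ := ih hρ h₁ (fun b hb => (hmem b hb).1)
    obtain ⟨Ps₂, m₂, d₂⟩ := ih hρ h₂ (fun b hb => (hmem b hb).2)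
    refine ⟨fun i => if h : i.1 < 2 ^ ρ.length then Ps₁ ⟨i.1, h⟩
      else Ps₂ ⟨i.1 - 2 ^ ρ.length, by
        have := i.2; simp only [List.length_cons, Nat.pow_succ] at this; omega⟩, ?_, ?_⟩
    · intro i
      dsimp only
      split
      · exact m₁ _
      · exact m₂ _
    · simpa [Fseq] using DerCl.trans hd (.congr d₁ (.refl _) d₂)

end Expr

open Expr in
/-- For each mem-basic form P over A (with A strictly totally ordered),
writing σ for the enumeration of α̃(P) in increasing order, there exist mem-basic
forms P_0, …, P_{2^{|σ|}−1} with CP_cl ⊢ P = F_σ(P_0, …, P_{2^{|σ|}−1}). -/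
theorem stmt_3 {A : Type} [LinearOrder A] (P : Expr A) (hP : IsMBF P) :
    ∃ Ps : Fin (2 ^ ((sha P).sort (· ≤ ·)).length) → Expr A,
      (∀ i, IsMBF (Ps i)) ∧ DerCl P (Fseq ((sha P).sort (· ≤ ·)) Ps) := by
  exact exists_Fseq _ (Finset.sort_nodup _ _) hP (fun a ha => (Finset.mem_sort _).1 ha)
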